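/- For every n ∈ ℕ, every real α > −1, and every k ∈ ℕ, the k-th moment of the Rakhmanov density of the orthonormal Laguerre polynomial is ⟨x^k⟩_{n,α} = ( n! Γ(k+α+1) / Γ(n+α+1) ) · Σ_{r=0}^{n} C(k, n−r)² · C(k+α+r, r), where C(k, n−r) is the ordinary binomial coefficient and C(k+α+r, r) = Γ(k+α+r+1)/( r! Γ(k+α+1) ) is the generalized binomial coefficient. -/

import Mathlib

open MeasureTheory Real

/-- The generalized Laguerre polynomial `L_n^{(α)}`. -/
noncomputable def laguerreL (α : ℝ) (n : ℕ) (x : ℝ) : ℝ :=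
  ∑ k ∈ Finset.range (n + 1),
    (-1) ^ k * Real.Gamma ((n : ℝ) + α + 1) /
      (Real.Gamma ((k : ℝ) + α + 1) * ((n - k).factorial : ℝ) * (k.factorial : ℝ)) * x ^ k

/-- The Rakhmanov density of the orthonormal Laguerre polynomial
`p_n^{(α)}(x) = (n!/Γ(n+α+1))^{1/2} L_n^{(α)}(x)`, i.e.
`ρ_{n,α}(x) = p_n^{(α)}(x)^2 x^α e^{-x}`. -/
noncomputable def laguerreρ (α : ℝ) (n : ℕ) (x : ℝ) : ℝ :=
  ((n.factorial : ℝ) / Real.Gamma ((n : ℝ) + α + 1)) * (laguerreL α n x) ^ 2 *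
    x ^ α * Real.exp (-x)

/-!
In terms of the multiset coefficients `multichoose r n = r (r + 1) ⋯ (r + n - 1) / n!`, which make
sense for every real `r`, the Laguerre polynomial is
`L_n^{(α)} = ∑_{i + j = n} (-1)^i / i! * multichoose (α + i + 1) j * x ^ i`.
Chu–Vandermonde then gives both the connection formula
`L_n^{(α)} = ∑_{i + m = n} multichoose (α - γ) i * L_m^{(γ)}`
and the moments of `L_n^{(α)}` against `x ^ γ * exp (-x)`, hence the orthogonality of the
`L_m^{(γ)}`. Taking `γ = α + s`, the weight `x ^ s * x ^ α * exp (-x)` is the one for which the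
`L_m^{(γ)}` are orthogonal, so that only the diagonal terms of `L_n^{(α)} ^ 2` survive, with
coefficients `multichoose (-s) (n - r) ^ 2 = choose s (n - r) ^ 2`.
-/

open Finset Polynomial

theorem sum_antidiagonal_sum_antidiagonal_left_comm {A M : Type*} [AddCommMonoid A]
    [HasAntidiagonal A] [AddCommMonoid M] (f : A → A → A → M) (n : A) :
    ∑ p ∈ antidiagonal n, ∑ q ∈ antidiagonal p.2, f p.1 q.1 q.2 =
      ∑ p ∈ antidiagonal n, ∑ q ∈ antidiagonal p.2, f q.1 p.1 q.2 := by
  rw [sum_sigma', sum_sigma']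
  let exchange : (Σ _ : A × A, A × A) → Σ _ : A × A, A × A :=
    fun t ↦ ⟨(t.2.1, t.1.1 + t.2.2), (t.1.1, t.2.2)⟩
  refine sum_nbij' exchange exchange ?_ ?_ ?_ ?_ fun _ _ ↦ rfl
  all_goals
    rintro ⟨⟨a, b⟩, c, d⟩ h
    obtain ⟨rfl, rfl⟩ : a + b = n ∧ c + d = b := by simpa using h
    simp [exchange, add_left_comm]

section ChuVandermonde

variable {R : Type*} [Ring R] [BinomialRing R]

theorem choose_neg_eq_neg_one_pow_mul (r : R) (n : ℕ) :
    Ring.choose (-r) n = (-1) ^ n * Ring.multichoose r n := by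
  rw [Ring.choose_neg', Units.smul_def, zsmul_eq_mul, Int.cast_negOnePow_natCast]

theorem multichoose_neg_eq_neg_one_pow_mul (r : R) (n : ℕ) :
    Ring.multichoose (-r) n = (-1) ^ n * Ring.choose r n := by
  rcases neg_one_pow_eq_or R n with h | h <;>
    simpa [h, neg_eq_iff_eq_neg] using (choose_neg_eq_neg_one_pow_mul (-r) n).symm

theorem multichoose_neg_sq (r : R) (n : ℕ) :
    Ring.multichoose (-r) n ^ 2 = Ring.choose r n ^ 2 := by
  rcases neg_one_pow_eq_or R n with h | h <;> simp [multichoose_neg_eq_neg_one_pow_mul, h]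

theorem multichoose_neg_natCast (i n : ℕ) :
    Ring.multichoose (-i : R) n = (-1) ^ n * (i.choose n : R) := by
  rw [multichoose_neg_eq_neg_one_pow_mul, Ring.choose_natCast]

theorem add_multichoose_eq {r s : R} (n : ℕ) (h : Commute r s) :
    Ring.multichoose (r + s) n =
      ∑ ij ∈ antidiagonal n, Ring.multichoose r ij.1 * Ring.multichoose s ij.2 := by
  rw [← neg_neg (r + s), multichoose_neg_eq_neg_one_pow_mul, neg_add,
    Ring.add_choose_eq n h.neg_left.neg_right, mul_sum]
  refine sum_congr rfl fun ij hij ↦ ?_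
  rw [choose_neg_eq_neg_one_pow_mul, choose_neg_eq_neg_one_pow_mul,
    ← HasAntidiagonal.mem_antidiagonal.mp hij, pow_add]
  rcases neg_one_pow_eq_or R ij.1 with h₁ | h₁ <;>
    rcases neg_one_pow_eq_or R ij.2 with h₂ | h₂ <;> simp [h₁, h₂]

theorem sum_neg_one_pow_mul_multichoose_mul_multichoose_add {r s : R} (n : ℕ)
    (h : Commute r s) :
    ∑ ij ∈ antidiagonal n,
        (-1) ^ ij.1 * Ring.multichoose r ij.1 * Ring.multichoose (s + ij.1) ij.2 =
      Ring.multichoose (s - r) n := by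
  have hcomm : Commute (-r) (s + n - 1) :=
    ((h.add_right (Nat.commute_cast r n)).sub_right (Commute.one_right r)).neg_left
  rw [Ring.multichoose_eq, show s - r + n - 1 = -r + (s + n - 1) by abel,
    Ring.add_choose_eq n hcomm]
  refine sum_congr rfl fun ij hij ↦ ?_
  rw [choose_neg_eq_neg_one_pow_mul, Ring.multichoose_eq (s + ij.1),
    ← HasAntidiagonal.mem_antidiagonal.mp hij, Nat.cast_add, add_assoc s]

end ChuVandermonde

theorem Gamma_add_natCast {z : ℝ} (hz : ∀ m : ℕ, z ≠ -m) (n : ℕ) :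
    Gamma (z + n) = n.factorial * Ring.multichoose z n * Gamma z := by
  rw [← nsmul_eq_mul, Ring.factorial_nsmul_multichoose_eq_ascPochhammer,
    ascPochhammer_smeval_eq_eval]
  induction n with
  | zero => simp
  | succ n ih =>
    have hzn : z + n ≠ 0 := fun h ↦ hz n (eq_neg_of_add_eq_zero_left h)
    rw [Nat.cast_succ, ← add_assoc, Gamma_add_one hzn, ih, ascPochhammer_succ_eval]
    ring

theorem add_one_ne_neg_natCast {γ : ℝ} (hγ : -1 < γ) (m : ℕ) : γ + 1 ≠ -m := by
  have : (0 : ℝ) ≤ m := m.cast_nonneg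
  linarith

/-- The Laguerre polynomial `L_n^{(α)}` as an element of `ℝ[X]`. Its coefficients are written with
`Ring.multichoose` instead of quotients of `Γ`-values, so that they are correct for every real `α`,
including the negative integers. -/
noncomputable def laguerrePoly (α : ℝ) (n : ℕ) : ℝ[X] :=
  ∑ ij ∈ antidiagonal n,
    monomial ij.1 ((-1) ^ ij.1 / ij.1.factorial * Ring.multichoose (α + ij.1 + 1) ij.2)

theorem laguerreL_eq_eval_laguerrePoly {α : ℝ} (hα : ∀ m : ℕ, α + 1 ≠ -m) (n : ℕ) (x : ℝ) :
    laguerreL α n x = (laguerrePoly α n).eval x := by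
  rw [laguerreL, laguerrePoly, eval_finsetSum, Nat.sum_antidiagonal_eq_sum_range_succ_mk]
  refine sum_congr rfl fun i hi ↦ ?_
  have hαi (m : ℕ) : α + i + 1 ≠ -m := fun h ↦ hα (i + m) (by push_cast; linarith)
  have hΓ : Gamma (n + α + 1) =
      (n - i).factorial * Ring.multichoose (α + i + 1) (n - i) * Gamma (α + i + 1) := by
    rw [← Gamma_add_natCast hαi, Nat.cast_sub (mem_range_succ_iff.mp hi)]
    ring_nf
  have := Gamma_ne_zero hαi
  rw [eval_monomial, hΓ, add_comm (i : ℝ) α]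
  field_simp

theorem natDegree_laguerrePoly_le (α : ℝ) (n : ℕ) : (laguerrePoly α n).natDegree ≤ n :=
  natDegree_sum_le_of_forall_le _ _ fun _ hij ↦
    (natDegree_monomial_le _).trans (HasAntidiagonal.antidiagonal.fst_le hij)

theorem coeff_laguerrePoly_self (α : ℝ) (n : ℕ) :
    (laguerrePoly α n).coeff n = (-1) ^ n / n.factorial := by
  rw [laguerrePoly, finsetSum_coeff, sum_eq_single (n, 0)]
  · simp
  · rintro ⟨i, j⟩ hij hne
    refine coeff_monomial_of_ne _ fun h ↦ hne ?_
    grind [HasAntidiagonal.mem_antidiagonal]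
  · simp

theorem laguerrePoly_eq_sum_multichoose_smul (α β : ℝ) (n : ℕ) :
    laguerrePoly α n =
      ∑ im ∈ antidiagonal n, Ring.multichoose (α - β) im.1 • laguerrePoly β im.2 := by
  have vandermonde (i j : ℕ) : Ring.multichoose (α + i + 1) j = ∑ ab ∈ antidiagonal j,
      Ring.multichoose (α - β) ab.1 * Ring.multichoose (β + i + 1) ab.2 := by
    rw [← add_multichoose_eq _ (Commute.all _ _)]
    ring_nf
  simp only [laguerrePoly, vandermonde, mul_sum, map_sum, smul_sum, smul_monomial, smul_eq_mul,
    mul_left_comm (Ring.multichoose (α - β) _)]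
  exact sum_antidiagonal_sum_antidiagonal_left_comm (fun i a b ↦ monomial i
    ((-1) ^ i / i.factorial * (Ring.multichoose (α - β) a * Ring.multichoose (β + i + 1) b))) n

/-- The moment functional on `ℝ[X]` of the weight `x ^ γ * exp (-x)` on `(0, ∞)`. It is defined
algebraically, by prescribing the moments `Γ(γ + i + 1)`, so that linearity needs no
integrability. -/
noncomputable def gammaFunctional (γ : ℝ) : ℝ[X] →ₗ[ℝ] ℝ :=
  lsum fun i ↦ Gamma (γ + i + 1) • LinearMap.id

theorem gammaFunctional_monomial (γ : ℝ) (i : ℕ) (c : ℝ) :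
    gammaFunctional γ (monomial i c) = Gamma (γ + i + 1) * c := by
  simp [gammaFunctional]

theorem gammaFunctional_X_pow_mul (γ : ℝ) (j : ℕ) (p : ℝ[X]) :
    gammaFunctional γ (X ^ j * p) = gammaFunctional (γ + j) p := by
  induction p using Polynomial.induction_on' with
  | add p q hp hq => rw [mul_add, map_add, map_add, hp, hq]
  | monomial i c =>
    rw [X_pow_mul_monomial, gammaFunctional_monomial, gammaFunctional_monomial]
    push_cast
    ring_nf

theorem gammaFunctional_laguerrePoly {γ : ℝ} (hγ : ∀ m : ℕ, γ + 1 ≠ -m) (α : ℝ) (n : ℕ) :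
    gammaFunctional γ (laguerrePoly α n) = Gamma (γ + 1) * Ring.multichoose (α - γ) n := by
  rw [show α - γ = α + 1 - (γ + 1) by ring,
    ← sum_neg_one_pow_mul_multichoose_mul_multichoose_add n (Commute.all _ _), laguerrePoly,
    map_sum, mul_sum]
  refine sum_congr rfl fun ij _ ↦ ?_
  rw [gammaFunctional_monomial, add_right_comm γ, Gamma_add_natCast hγ, add_right_comm α]
  field_simp

/-- The moment of `X ^ i * L_n^{(γ)}` carries the factor `multichoose (-i) n`, which vanishes for
`i < n`. -/
theorem gammaFunctional_mul_laguerrePoly {γ : ℝ} (hγ : ∀ m : ℕ, γ + 1 ≠ -m) {p : ℝ[X]} {n : ℕ}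
    (hp : p.natDegree ≤ n) :
    gammaFunctional γ (p * laguerrePoly γ n) = (-1) ^ n * p.coeff n * Gamma (γ + n + 1) := by
  have moment (i : ℕ) : gammaFunctional γ (X ^ i * laguerrePoly γ n) =
      (-1) ^ n * (i.choose n) * Gamma (γ + i + 1) := by
    have hγi (m : ℕ) : γ + i + 1 ≠ -m := fun h ↦ hγ (i + m) (by push_cast; linarith)
    rw [gammaFunctional_X_pow_mul, gammaFunctional_laguerrePoly hγi, sub_add_cancel_left,
      multichoose_neg_natCast, mul_comm]
  conv_lhs => rw [p.as_sum_range_C_mul_X_pow' (Nat.lt_succ_of_le hp), sum_mul, map_sum]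
  simp only [mul_assoc, ← smul_eq_C_mul, map_smul, smul_mul_assoc, moment]
  rw [sum_range_succ, sum_eq_zero fun i hi ↦ ?_]
  · simp [mul_left_comm]
  · simp [Nat.choose_eq_zero_of_lt (mem_range.mp hi)]

theorem gammaFunctional_laguerrePoly_orthogonal {γ : ℝ} (hγ : ∀ m : ℕ, γ + 1 ≠ -m) (m n : ℕ) :
    gammaFunctional γ (laguerrePoly γ m * laguerrePoly γ n) =
      if m = n then Gamma (γ + n + 1) / n.factorial else 0 := by
  wlog hmn : m ≤ n generalizing m n
  · rw [mul_comm, this n m (by lia), if_neg (by lia), if_neg (by lia)]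
  rw [gammaFunctional_mul_laguerrePoly hγ ((natDegree_laguerrePoly_le γ m).trans hmn)]
  split_ifs with h
  · rw [h, coeff_laguerrePoly_self, ← mul_div_assoc, ← mul_pow, neg_one_mul, neg_neg, one_pow,
      one_div_mul_eq_div]
  · rw [coeff_eq_zero_of_natDegree_lt
      ((natDegree_laguerrePoly_le γ m).trans_lt (lt_of_le_of_ne hmn h)), mul_zero, zero_mul]

theorem gammaFunctional_laguerrePoly_mul_laguerrePoly {γ : ℝ} (hγ : ∀ m : ℕ, γ + 1 ≠ -m)
    (α β : ℝ) (m n : ℕ) :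
    gammaFunctional γ (laguerrePoly α m * laguerrePoly β n) =
      ∑ r ∈ range (min m n + 1), Ring.multichoose (α - γ) (m - r) *
        Ring.multichoose (β - γ) (n - r) * (Gamma (γ + r + 1) / r.factorial) := by
  have expand (δ : ℝ) (l : ℕ) : laguerrePoly δ l =
      ∑ r ∈ range (l + 1), Ring.multichoose (δ - γ) (l - r) • laguerrePoly γ r := by
    rw [laguerrePoly_eq_sum_multichoose_smul δ γ, ← Nat.sum_antidiagonal_swap,
      Nat.sum_antidiagonal_eq_sum_range_succ_mk]
    rfl
  rw [expand α m, expand β n, sum_mul_sum, ← Nat.add_min_add_right, ← range_inter_range,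
    ← sum_ite_mem]
  simp only [map_sum, smul_mul_smul_comm, map_smul,
    gammaFunctional_laguerrePoly_orthogonal hγ, smul_eq_mul, mul_ite, mul_zero, sum_ite_eq]

theorem eqOn_monomial_mul_rpow_mul_exp_neg (γ c : ℝ) (i : ℕ) :
    Set.EqOn (fun x : ℝ ↦ c * (exp (-x) * x ^ (γ + i + 1 - 1)))
      (fun x ↦ c * x ^ i * (x ^ γ * exp (-x))) (Set.Ioi 0) := fun x hx ↦ by
  simp only [add_sub_cancel_right, rpow_add hx, rpow_natCast]
  ring

theorem integral_eval_mul_rpow_mul_exp_neg {γ : ℝ} (hγ : -1 < γ) (p : ℝ[X]) :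
    ∫ x in Set.Ioi 0, p.eval x * (x ^ γ * exp (-x)) = gammaFunctional γ p := by
  have hpos (i : ℕ) : 0 < γ + i + 1 := by
    have : (0 : ℝ) ≤ i := i.cast_nonneg
    linarith
  have hint (i : ℕ) (c : ℝ) :
      IntegrableOn (fun x ↦ c * x ^ i * (x ^ γ * exp (-x))) (Set.Ioi 0) :=
    (integrableOn_congr_fun (eqOn_monomial_mul_rpow_mul_exp_neg γ c i) measurableSet_Ioi).mp
      ((GammaIntegral_convergent (hpos i)).const_mul c)
  have hmoment (i : ℕ) (c : ℝ) :
      ∫ x in Set.Ioi 0, c * x ^ i * (x ^ γ * exp (-x)) = Gamma (γ + i + 1) * c := by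
    rw [← setIntegral_congr_fun measurableSet_Ioi (eqOn_monomial_mul_rpow_mul_exp_neg γ c i),
      integral_const_mul, ← Gamma_eq_integral (hpos i), mul_comm]
  simp only [eval_eq_sum, Polynomial.sum, sum_mul]
  rw [integral_finsetSum _ fun i _ ↦ hint i _]
  conv_rhs => rw [p.as_sum_support, map_sum]
  simp only [hmoment, gammaFunctional_monomial]

theorem laguerre_moments_general (n : ℕ) {α s : ℝ} (hα : ∀ m : ℕ, α + 1 ≠ -m)
    (hs : -1 < s + α) :
    ∫ x in Set.Ioi 0, x ^ s * laguerreρ α n x =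
      n.factorial * Gamma (s + α + 1) / Gamma (n + α + 1) *
        ∑ r ∈ range (n + 1), Ring.choose s (n - r) ^ 2 *
          (Gamma (s + α + r + 1) / (r.factorial * Gamma (s + α + 1))) := by
  have hΓ : Gamma (s + α + 1) ≠ 0 := Gamma_ne_zero (add_one_ne_neg_natCast hs)
  have hintegrand : Set.EqOn (fun x ↦ x ^ s * laguerreρ α n x)
      (fun x ↦ n.factorial / Gamma (n + α + 1) *
        ((laguerrePoly α n * laguerrePoly α n).eval x * (x ^ (s + α) * exp (-x))))
      (Set.Ioi 0) := fun x hx ↦ by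
    simp only [laguerreρ, laguerreL_eq_eval_laguerrePoly hα, rpow_add hx, eval_mul]
    ring
  rw [setIntegral_congr_fun measurableSet_Ioi hintegrand, integral_const_mul,
    integral_eval_mul_rpow_mul_exp_neg hs,
    gammaFunctional_laguerrePoly_mul_laguerrePoly (add_one_ne_neg_natCast hs), min_self,
    mul_div_right_comm, mul_assoc]
  congr 1
  rw [mul_sum]
  refine sum_congr rfl fun r _ ↦ ?_
  rw [← pow_two, sub_add_cancel_right, multichoose_neg_sq]
  field_simp

/-- For every `n ∈ ℕ`, real `α > −1`, and `k ∈ ℕ`, the `k`-th moment of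
the Rakhmanov density of the orthonormal Laguerre polynomial equals
`(n! Γ(k+α+1)/Γ(n+α+1)) · Σ_{r=0}^n C(k, n−r)² · Γ(k+α+r+1)/(r! Γ(k+α+1))`. -/
theorem laguerre_moments (n : ℕ) (α : ℝ) (hα : -1 < α) (k : ℕ) :
    (∫ x in Set.Ioi (0 : ℝ), x ^ k * laguerreρ α n x) =
      (n.factorial : ℝ) * Real.Gamma ((k : ℝ) + α + 1) / Real.Gamma ((n : ℝ) + α + 1) *
        ∑ r ∈ Finset.range (n + 1),
          ((k.choose (n - r) : ℝ)) ^ 2 *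
            (Real.Gamma ((k : ℝ) + α + (r : ℝ) + 1) /
              ((r.factorial : ℝ) * Real.Gamma ((k : ℝ) + α + 1))) := by
  have hk : -1 < (k : ℝ) + α := by linarith [k.cast_nonneg (α := ℝ)]
  simpa only [rpow_natCast, Ring.choose_natCast] using
    laguerre_moments_general n (add_one_ne_neg_natCast hα) hk
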